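/- Lower enhancement via connecting paths, case p > p' (Proposition 3.2, item 2). Let (V, E, ends, α) be a finite graph with boundary condition, p ∈ (0,1), q > 0, and suppose p > p'. Let Ẽ ⊆ E be such that for every e ∈ Ẽ, the collection Γ_{E∖Ẽ}(e) is nonempty. For e ∈ Ẽ set ε̃_e := (p−p') · P_{min(p,p')}({ω : ∃ γ ∈ Γ_{E∖Ẽ}(e) with every edge of γ open in ω}), and set ε̃_e := 0 for e ∉ Ẽ. Then P_{(p'+ε̃_e)_{e∈E}} ≼ φ^α_{G,p,q}. -/

import Mathlib

open scoped Classical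

noncomputable section

namespace FKPaper

variable {V E : Type*}

/-- One-step adjacency between wired vertices through an edge in `F`. -/
def Step (ends : E → Sym2 V) (α : Setoid V) (F : Set E) (x y : Quotient α) : Prop :=
  ∃ e ∈ F, Sym2.map (Quotient.mk α) (ends e) = s(x, y)

/-- Setoid of connected components of the wired multigraph with edge set `F`. -/
def connSetoid (ends : E → Sym2 V) (α : Setoid V) (F : Set E) : Setoid (Quotient α) :=
  Relation.EqvGen.setoid (Step ends α F)

/-- Connectivity in the wired multigraph with edge set `F`. -/
def Conn (ends : E → Sym2 V) (α : Setoid V) (F : Set E) (x y : Quotient α) : Prop :=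
  (connSetoid ends α F).r x y

/-- The two endpoints of `e` are joined in the wired multigraph with edge set `F`. -/
def EndsConn (ends : E → Sym2 V) (α : Setoid V) (F : Set E) (e : E) : Prop :=
  ∀ x y : V, ends e = s(x, y) → Conn ends α F (Quotient.mk α x) (Quotient.mk α y)

/-- Number of connected components `k(ω, α)`. -/
def numComponents (ends : E → Sym2 V) (α : Setoid V) (ω : E → Bool) : ℕ :=
  Nat.card (Quotient (connSetoid ends α {e | ω e = true}))

/-- `p' = p / (p + q (1 - p))`. -/
def pPrime (p q : ℝ) : ℝ := p / (p + q * (1 - p))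

/-- Total mass of a set under a weight function. -/
def massOf {ι : Type*} [Fintype ι] (w : ι → ℝ) (A : Set ι) : ℝ :=
  ∑ x ∈ Finset.univ.filter (· ∈ A), w x

/-- Normalized probability of a set under a weight function. -/
def probOf {ι : Type*} [Fintype ι] (w : ι → ℝ) (A : Set ι) : ℝ :=
  massOf w A / massOf w Set.univ

/-- FK weight of a configuration. -/
def fkWeight [Fintype E] (ends : E → Sym2 V) (α : Setoid V) (p q : ℝ) (ω : E → Bool) : ℝ :=
  p ^ (Finset.univ.filter fun e => ω e = true).card *
    (1 - p) ^ (Finset.univ.filter fun e => ω e = false).card *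
    q ^ numComponents ends α ω

/-- The FK (random cluster) probability measure `φ^α_{G,p,q}`. -/
def fkProb [Fintype E] (ends : E → Sym2 V) (α : Setoid V) (p q : ℝ)
    (A : Set (E → Bool)) : ℝ :=
  probOf (fkWeight ends α p q) A

/-- Inhomogeneous Bernoulli weight. -/
def berWeight [Fintype E] (pe : E → ℝ) (ω : E → Bool) : ℝ :=
  ∏ e, if ω e = true then pe e else 1 - pe e

/-- Inhomogeneous Bernoulli product measure `P_{(p_e)}`. -/
def berProb [Fintype E] (pe : E → ℝ) (A : Set (E → Bool)) : ℝ :=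
  probOf (berWeight pe) A

/-- Increasing sets of configurations. -/
def Increasing (A : Set (E → Bool)) : Prop :=
  ∀ ⦃ω ω' : E → Bool⦄, ω ∈ A → (∀ e, ω e ≤ ω' e) → ω' ∈ A

/-- Stochastic domination `μ ≼ ν`. -/
def StochDom [Fintype E] (μ ν : Set (E → Bool) → ℝ) : Prop :=
  ∀ A : Set (E → Bool), Increasing A → μ A ≤ ν A

/-- `Q_F(e)`: cutsets for `e` included in `F`. -/
def Cutsets (ends : E → Sym2 V) (α : Setoid V) (F : Set E) (e : E) : Set (Set E) :=
  {χ | χ ⊆ F ∧ ¬ EndsConn ends α {e' | e' ∉ χ ∧ e' ≠ e} e}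

/-! The hypothesis `p > p'` says that `q > 1`. Then, given the states of all other edges, an FK edge
is open with probability at least `p'`, and with probability exactly `p` as soon as its endpoints
are joined by other open edges. Reveal the edges of `Ẽ` first and then the remaining ones. By
Holley's inequality, the law of the remaining edges given those of `Ẽ` always dominates `P_{p'}`;
hence, given the other edges of `Ẽ`, an edge `e ∈ Ẽ` is open with probability at least
`p' + (p - p') P_{p'}(an open path off Ẽ joins the endpoints of e) = p' + ε̃_e`.
Holley's inequality, applied to the marginal on `Ẽ`, turns this bound into domination there. -/

/-- Under the measure with weight `w`, edge `i` is open with conditional probability at least `r`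
given the states in `ω` of the other edges. Cleared of denominators, so that nothing is asked when
`w` vanishes at both extensions. -/
def OpenProbGE {ι : Type*} [DecidableEq ι] (w : (ι → Bool) → ℝ) (ω : ι → Bool) (i : ι) (r : ℝ) :
    Prop :=
  r * (w (Function.update ω i true) + w (Function.update ω i false)) ≤
    w (Function.update ω i true)

lemma OpenProbGE.mono {ι : Type*} [DecidableEq ι] {w : (ι → Bool) → ℝ} (hw : 0 ≤ w)
    {ω : ι → Bool} {i : ι} {r s : ℝ} (h : OpenProbGE w ω i s) (hrs : r ≤ s) :
    OpenProbGE w ω i r :=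
  (mul_le_mul_of_nonneg_right hrs (add_nonneg (hw _) (hw _))).trans h

lemma update_false_inf_of_eq_false {ι : Type*} [DecidableEq ι] (a : ι → Bool) {b : ι → Bool}
    {i : ι} (hbi : b i = false) : Function.update a i false ⊓ b = a ⊓ b := by
  ext j
  by_cases hj : j = i
  · subst hj; simp [hbi]
  · simp [hj]

lemma update_true_update_false_sup {ι : Type*} [DecidableEq ι] {a : ι → Bool} (b : ι → Bool)
    {i : ι} (hai : a i = true) :
    Function.update (Function.update a i false ⊔ b) i true = a ⊔ b := by
  ext j
  by_cases hj : j = i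
  · subst hj; simp [hai]
  · simp [hj]

section ProductMeasure

variable {ι : Type*} [Fintype ι]

lemma probOf_eq_sum_indicator (w : ι → ℝ) (A : Set ι) :
    probOf w A = (∑ x, w x * A.indicator 1 x) / ∑ x, w x := by
  simp [probOf, massOf, Finset.sum_filter, Set.indicator_apply]

lemma berWeight_nonneg {r : ι → ℝ} (hr : ∀ i, r i ∈ Set.Icc 0 1) : 0 ≤ berWeight r := fun ω =>
  Finset.prod_nonneg fun i _ => by
    split_ifs
    exacts [(hr i).1, sub_nonneg.2 (hr i).2]

lemma sum_berWeight [DecidableEq ι] (r : ι → ℝ) : ∑ ω, berWeight r ω = 1 := by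
  simp [berWeight, ← Fintype.prod_sum fun i (b : Bool) => if b = true then r i else 1 - r i]

lemma berWeight_update [DecidableEq ι] (r : ι → ℝ) (ω : ι → Bool) (i : ι) (b : Bool) :
    berWeight r (Function.update ω i b) = (if b = true then r i else 1 - r i) *
      ∏ j ∈ Finset.univ.erase i, if ω j = true then r j else 1 - r j := by
  rw [berWeight, ← Finset.mul_prod_erase _ _ (Finset.mem_univ i), Function.update_self]
  congr 1
  refine Finset.prod_congr rfl fun j hj => ?_
  rw [Function.update_of_ne (Finset.ne_of_mem_erase hj)]

lemma one_sub_mul_berWeight_update_true [DecidableEq ι] (r : ι → ℝ) (ω : ι → Bool) (i : ι) :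
    (1 - r i) * berWeight r (Function.update ω i true) =
      r i * berWeight r (Function.update ω i false) := by
  simp only [berWeight_update, if_true, Bool.false_eq_true, if_false]
  ring

-- Close the edges open in `a` but not in `b` one at a time.
lemma berWeight_mul_le_inf_mul_sup [DecidableEq ι] {w : (ι → Bool) → ℝ} {r : ι → ℝ}
    (hr : ∀ i, r i ∈ Set.Ico 0 1) (hwr : ∀ ω i, OpenProbGE w ω i (r i)) (a b : ι → Bool) :
    berWeight r a * w b ≤ berWeight r (a ⊓ b) * w (a ⊔ b) := by
  have hr' : ∀ i, r i ∈ Set.Icc 0 1 := fun i => Set.Ico_subset_Icc_self (hr i)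
  induction a using WellFoundedLT.induction with
  | ind a ih =>
    by_cases hab : a ≤ b
    · rw [inf_eq_left.2 hab, sup_eq_right.2 hab]
    obtain ⟨i, hi⟩ : ∃ i, ¬ a i ≤ b i := by simpa [Pi.le_def] using hab
    obtain ⟨hai, hbi⟩ : a i = true ∧ b i = false := by
      cases h : a i <;> cases h' : b i <;> simp_all
    set a' := Function.update a i false with ha'
    have ha : a = Function.update a i true := by rw [← hai, Function.update_eq_self]
    have hlt : a' < a := update_lt_self_iff.2 (by simp [hai])
    have hinf : a' ⊓ b = a ⊓ b := update_false_inf_of_eq_false a hbi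
    have hsup_true : Function.update (a' ⊔ b) i true = a ⊔ b :=
      update_true_update_false_sup b hai
    have hsup_false : Function.update (a' ⊔ b) i false = a' ⊔ b := by
      rw [Function.update_eq_self_iff]
      simp [ha', hbi]
    have hopen : r i * w (a' ⊔ b) ≤ (1 - r i) * w (a ⊔ b) := by
      have := hwr (a' ⊔ b) i
      rw [OpenProbGE, hsup_true, hsup_false] at this
      linarith
    refine le_of_mul_le_mul_left ?_ (sub_pos.2 (hr i).2)
    calc (1 - r i) * (berWeight r a * w b)
        = r i * (berWeight r a' * w b) := by
          rw [ha', ← mul_assoc, ← mul_assoc, ← one_sub_mul_berWeight_update_true, ← ha]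
      _ ≤ r i * (berWeight r (a ⊓ b) * w (a' ⊔ b)) :=
          mul_le_mul_of_nonneg_left (hinf ▸ ih a' hlt) (hr i).1
      _ = berWeight r (a ⊓ b) * (r i * w (a' ⊔ b)) := by ring
      _ ≤ berWeight r (a ⊓ b) * ((1 - r i) * w (a ⊔ b)) :=
          mul_le_mul_of_nonneg_left hopen (berWeight_nonneg hr' _)
      _ = (1 - r i) * (berWeight r (a ⊓ b) * w (a ⊔ b)) := by ring

lemma sum_mul_sum_berWeight_mul_le [DecidableEq ι] {w : (ι → Bool) → ℝ} (hw : 0 ≤ w) {r : ι → ℝ}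
    (hr : ∀ i, r i ∈ Set.Ico 0 1) (hwr : ∀ ω i, OpenProbGE w ω i (r i))
    {f : (ι → Bool) → ℝ} (hf₀ : 0 ≤ f) (hf : Monotone f) :
    (∑ ω, w ω) * ∑ ω, berWeight r ω * f ω ≤ ∑ ω, w ω * f ω := by
  have hmass : 0 ≤ ∑ ω, w ω := Finset.sum_nonneg fun ω _ => hw ω
  have hr' : ∀ i, r i ∈ Set.Icc 0 1 := fun i => Set.Ico_subset_Icc_self (hr i)
  have hholley := holley ((∑ ω, w ω) • berWeight r) w f hf₀
    (smul_nonneg hmass (berWeight_nonneg hr')) hw hf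
    (by simp [← Finset.mul_sum, sum_berWeight])
    (fun a b => by
      simpa only [Pi.smul_apply, smul_eq_mul, mul_assoc] using
        mul_le_mul_of_nonneg_left (berWeight_mul_le_inf_mul_sup hr hwr a b) hmass)
  calc (∑ ω, w ω) * ∑ ω, berWeight r ω * f ω
      = ∑ ω, f ω * ((∑ ω, w ω) • berWeight r) ω := by
        rw [Finset.mul_sum]
        refine Finset.sum_congr rfl fun ω _ => ?_
        rw [Pi.smul_apply, smul_eq_mul]
        ring
    _ ≤ ∑ ω, f ω * w ω := hholley
    _ = ∑ ω, w ω * f ω := by simp only [mul_comm]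

lemma sum_sum_mul_sum_sum_berWeight_mul_le {κ : Type*} [Fintype κ] [DecidableEq ι] [DecidableEq κ]
    {w : (ι → Bool) → (κ → Bool) → ℝ} (hw : 0 ≤ w) {r : ι → ℝ} {s : κ → ℝ}
    (hr : ∀ i, r i ∈ Set.Ico 0 1) (hs : ∀ k, s k ∈ Set.Ico 0 1)
    (hwr : ∀ σ i, OpenProbGE (fun σ => ∑ τ, w σ τ) σ i (r i))
    (hws : ∀ σ τ k, OpenProbGE (w σ) τ k (s k))
    {f : (ι → Bool) → (κ → Bool) → ℝ} (hf₀ : 0 ≤ f) (hf₁ : Monotone f)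
    (hf₂ : ∀ σ, Monotone (f σ)) :
    (∑ σ, ∑ τ, w σ τ) * ∑ σ, berWeight r σ * ∑ τ, berWeight s τ * f σ τ ≤
      ∑ σ, ∑ τ, w σ τ * f σ τ := by
  have hs₀ : 0 ≤ berWeight s := berWeight_nonneg fun k => Set.Ico_subset_Icc_self (hs k)
  calc (∑ σ, ∑ τ, w σ τ) * ∑ σ, berWeight r σ * ∑ τ, berWeight s τ * f σ τ
      ≤ ∑ σ, (∑ τ, w σ τ) * ∑ τ, berWeight s τ * f σ τ :=
        sum_mul_sum_berWeight_mul_le (fun σ => Finset.sum_nonneg fun τ _ => hw σ τ) hr hwr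
          (fun σ => Finset.sum_nonneg fun τ _ => mul_nonneg (hs₀ τ) (hf₀ σ τ))
          (fun σ σ' hσ => Finset.sum_le_sum fun τ _ =>
            mul_le_mul_of_nonneg_left (hf₁ hσ τ) (hs₀ τ))
    _ ≤ ∑ σ, ∑ τ, w σ τ * f σ τ := Finset.sum_le_sum fun σ _ =>
        sum_mul_sum_berWeight_mul_le (hw σ) hs (hws σ) (hf₀ σ) (hf₂ σ)

end ProductMeasure

section Glue

variable {S : Set E} {C : Set (E → Bool)}

/-- The configuration with states `σ` on `S` and `τ` off `S`, used to condition on the edges of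
`S`. -/
def glue (σ : {e // e ∈ S} → Bool) (τ : {e // e ∉ S} → Bool) : E → Bool := fun e =>
  if h : e ∈ S then σ ⟨e, h⟩ else τ ⟨e, h⟩

lemma glue_mono {σ σ' : {e // e ∈ S} → Bool} {τ τ' : {e // e ∉ S} → Bool} (hσ : σ ≤ σ')
    (hτ : τ ≤ τ') : glue σ τ ≤ glue σ' τ' := fun e => by
  unfold glue
  split_ifs with h
  exacts [hσ _, hτ _]

lemma glue_update_left (σ : {e // e ∈ S} → Bool) (τ : {e // e ∉ S} → Bool) (e : {e // e ∈ S})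
    (b : Bool) : glue (Function.update σ e b) τ = Function.update (glue σ τ) e b := by
  ext e'
  by_cases h : e' = e
  · subst h; simp [glue]
  · simp [glue, h, Subtype.ext_iff]

lemma glue_update_right (σ : {e // e ∈ S} → Bool) (τ : {e // e ∉ S} → Bool) (e : {e // e ∉ S})
    (b : Bool) : glue σ (Function.update τ e b) = Function.update (glue σ τ) e b := by
  ext e'
  by_cases h : e' = e
  · subst h; simp [glue, e.2]
  · simp [glue, h, Subtype.ext_iff]

lemma indicator_glue_eq_of_dependsOn (hC : DependsOn (· ∈ C) Sᶜ) (σ σ' : {e // e ∈ S} → Bool)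
    (τ : {e // e ∉ S} → Bool) :
    C.indicator (1 : (E → Bool) → ℝ) (glue σ τ) = C.indicator 1 (glue σ' τ) := by
  have hmem : (glue σ τ ∈ C) = (glue σ' τ ∈ C) :=
    hC fun e he => by simp [glue, show e ∉ S from he]
  simp only [Set.indicator_apply, hmem, Pi.one_apply]

lemma openProbGE_glue_right {w : (E → Bool) → ℝ} {r : ℝ} {σ : {e // e ∈ S} → Bool}
    {τ : {e // e ∉ S} → Bool} {e : {e // e ∉ S}} (h : OpenProbGE w (glue σ τ) e r) :
    OpenProbGE (fun τ => w (glue σ τ)) τ e r := by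
  simpa only [OpenProbGE, glue_update_right] using h

variable [Fintype E]

variable (S) in
lemma sum_eq_sum_sum_glue (f : (E → Bool) → ℝ) :
    ∑ ω, f ω = ∑ σ : {e // e ∈ S} → Bool, ∑ τ, f (glue σ τ) := by
  rw [← Fintype.sum_prod_type']
  exact ((Equiv.piEquivPiSubtypeProd (· ∈ S) fun _ => Bool).symm.sum_comp f).symm

lemma berWeight_glue (r : E → ℝ) (σ : {e // e ∈ S} → Bool) (τ : {e // e ∉ S} → Bool) :
    berWeight r (glue σ τ) = berWeight (r ∘ Subtype.val) σ * berWeight (r ∘ Subtype.val) τ := by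
  rw [berWeight, ← Fintype.prod_subtype_mul_prod_subtype (· ∈ S)]
  congr 1 <;> exact Finset.prod_congr rfl fun e _ => by simp [glue, e.2]

end Glue

section Bernoulli

lemma Increasing.monotone_indicator {A : Set (E → Bool)} (hA : Increasing A) :
    Monotone (A.indicator (1 : (E → Bool) → ℝ)) := fun ω ω' hle => by
  by_cases h : ω ∈ A
  · simp [h, hA h hle]
  · rw [Set.indicator_of_notMem h]
    exact Set.indicator_nonneg (fun _ _ => zero_le_one) ω'

variable [Fintype E]

lemma berProb_eq_sum_indicator (r : E → ℝ) (A : Set (E → Bool)) :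
    berProb r A = ∑ ω, berWeight r ω * A.indicator 1 ω := by
  rw [berProb, probOf_eq_sum_indicator, sum_berWeight, div_one]

lemma berProb_mem_Icc {r : E → ℝ} (hr : ∀ e, r e ∈ Set.Icc 0 1) (A : Set (E → Bool)) :
    berProb r A ∈ Set.Icc 0 1 := by
  have hind : ∀ ω, A.indicator (1 : (E → Bool) → ℝ) ω ∈ Set.Icc 0 1 := fun ω => by
    by_cases h : ω ∈ A <;> simp [h]
  rw [berProb_eq_sum_indicator]
  constructor
  · exact Finset.sum_nonneg fun ω _ => mul_nonneg (berWeight_nonneg hr ω) (hind ω).1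
  · rw [← sum_berWeight r]
    exact Finset.sum_le_sum fun ω _ =>
      mul_le_of_le_one_right (berWeight_nonneg hr ω) (hind ω).2

lemma berProb_eq_sum_sum_glue (S : Set E) (r : E → ℝ) (A : Set (E → Bool)) :
    berProb r A = ∑ σ : {e // e ∈ S} → Bool, berWeight (r ∘ Subtype.val) σ *
      ∑ τ, berWeight (r ∘ Subtype.val) τ * A.indicator 1 (glue σ τ) := by
  simp only [berProb_eq_sum_indicator, sum_eq_sum_sum_glue S, berWeight_glue, mul_assoc,
    Finset.mul_sum]

variable {S : Set E} {C : Set (E → Bool)}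

lemma berProb_eq_sum_of_dependsOn (r : E → ℝ) (hC : DependsOn (· ∈ C) Sᶜ)
    (σ : {e // e ∈ S} → Bool) :
    berProb r C = ∑ τ, berWeight (r ∘ Subtype.val) τ * C.indicator 1 (glue σ τ) := by
  simp only [berProb_eq_sum_sum_glue S, indicator_glue_eq_of_dependsOn hC _ σ]
  rw [← Finset.sum_mul, sum_berWeight, one_mul]

variable {w : (E → Bool) → ℝ} {a : E → ℝ}

lemma sum_glue_mul_berProb_le (hw : 0 ≤ w) (ha : ∀ e, a e ∈ Set.Ico 0 1)
    (hwa : ∀ ω e, OpenProbGE w ω e (a e)) (hC : Increasing C) (hCS : DependsOn (· ∈ C) Sᶜ)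
    (σ : {e // e ∈ S} → Bool) :
    (∑ τ, w (glue σ τ)) * berProb a C ≤ ∑ τ, w (glue σ τ) * C.indicator 1 (glue σ τ) := by
  rw [berProb_eq_sum_of_dependsOn a hCS σ]
  exact sum_mul_sum_berWeight_mul_le (w := fun τ => w (glue σ τ))
    (f := fun τ => C.indicator 1 (glue σ τ)) (fun τ => hw _) (fun e => ha e)
    (fun τ e => openProbGE_glue_right (hwa _ e))
    (fun τ => Set.indicator_nonneg (fun _ _ => zero_le_one) _)
    (fun τ τ' hτ => hC.monotone_indicator (glue_mono le_rfl hτ))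

-- The conditional probability that `e` is open is at least `a e + (b - a e) * 1_C`; average it
-- over the edges off `S`, where the conditional law dominates the product measure of `a`.
lemma openProbGE_sum_glue (hw : 0 ≤ w) (ha : ∀ e, a e ∈ Set.Ico 0 1)
    (hwa : ∀ ω e, OpenProbGE w ω e (a e)) (hC : Increasing C) (hCS : DependsOn (· ∈ C) Sᶜ)
    (e : {e // e ∈ S}) {b : ℝ} (hab : a e ≤ b) (hwb : ∀ ω ∈ C, OpenProbGE w ω e b)
    (σ : {e // e ∈ S} → Bool) :
    OpenProbGE (fun σ => ∑ τ, w (glue σ τ)) σ e (a e + (b - a e) * berProb a C) := by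
  let W (c : Bool) (τ : {e // e ∉ S} → Bool) : ℝ := w (glue (Function.update σ e c) τ)
  let I (τ : {e // e ∉ S} → Bool) : ℝ := C.indicator 1 (glue σ τ)
  have haverage (c : Bool) : (∑ τ, W c τ) * berProb a C ≤ ∑ τ, W c τ * I τ := by
    simpa only [indicator_glue_eq_of_dependsOn hCS _ σ] using
      sum_glue_mul_berProb_le hw ha hwa hC hCS (Function.update σ e c)
  have hpoint (τ : {e // e ∉ S} → Bool) :
      a e * (W true τ + W false τ) + (b - a e) * (W true τ * I τ + W false τ * I τ) ≤
        W true τ := by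
    have hle := hwa (glue σ τ) e
    by_cases hτ : glue σ τ ∈ C
    · have := hwb _ hτ
      simp only [OpenProbGE, ← glue_update_left] at this
      simp only [I, hτ, Set.indicator_of_mem, Pi.one_apply, W]
      linarith
    · simp only [OpenProbGE, ← glue_update_left] at hle
      simp only [I, hτ, not_false_eq_true, Set.indicator_of_notMem, W]
      linarith
  have hsum := Finset.sum_le_sum fun τ (_ : τ ∈ Finset.univ) => hpoint τ
  simp only [Finset.sum_add_distrib, ← Finset.mul_sum] at hsum
  calc (a e + (b - a e) * berProb a C) * (∑ τ, W true τ + ∑ τ, W false τ)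
      = a e * (∑ τ, W true τ + ∑ τ, W false τ) +
        (b - a e) * ((∑ τ, W true τ) * berProb a C + (∑ τ, W false τ) * berProb a C) := by ring
    _ ≤ a e * (∑ τ, W true τ + ∑ τ, W false τ) +
        (b - a e) * (∑ τ, W true τ * I τ + ∑ τ, W false τ * I τ) := by
        gcongr
        exacts [haverage true, haverage false]
    _ ≤ ∑ τ, W true τ := hsum

theorem stochDom_probOf_of_openProbGE (hw : 0 ≤ w) (hmass : 0 < ∑ ω, w ω) {b r : E → ℝ}
    (ha : ∀ e, a e ∈ Set.Ico 0 1) (hb : ∀ e ∈ S, b e ∈ Set.Ico (a e) 1) {C : E → Set (E → Bool)}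
    (hC : ∀ e ∈ S, Increasing (C e)) (hCS : ∀ e ∈ S, DependsOn (· ∈ C e) Sᶜ)
    (hwa : ∀ ω e, OpenProbGE w ω e (a e)) (hwb : ∀ e ∈ S, ∀ ω ∈ C e, OpenProbGE w ω e (b e))
    (hr₀ : ∀ e, 0 ≤ r e) (hrS : ∀ e ∈ S, r e ≤ a e + (b e - a e) * berProb a (C e))
    (hrSc : ∀ e ∉ S, r e ≤ a e) :
    StochDom (berProb r) (probOf w) := by
  have hrb : ∀ e ∈ S, r e ≤ b e := fun e he => (hrS e he).trans <| by
    have hprob := berProb_mem_Icc (fun e => Set.Ico_subset_Icc_self (ha e)) (C e)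
    linarith [mul_le_of_le_one_right (sub_nonneg.2 (hb e he).1) hprob.2]
  intro A hA
  rw [probOf_eq_sum_indicator, le_div_iff₀ hmass, mul_comm, berProb_eq_sum_sum_glue S,
    sum_eq_sum_sum_glue S, sum_eq_sum_sum_glue S]
  refine sum_sum_mul_sum_sum_berWeight_mul_le
    (w := fun (σ : {e // e ∈ S} → Bool) τ => w (glue σ τ))
    (f := fun σ τ => A.indicator 1 (glue σ τ)) (fun _ _ => hw _)
    (fun e => ⟨hr₀ e, (hrb e e.2).trans_lt (hb e e.2).2⟩)
    (fun e => ⟨hr₀ e, (hrSc e e.2).trans_lt (ha e).2⟩) (fun σ e => ?_)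
    (fun σ τ e => openProbGE_glue_right ((hwa _ e).mono hw (hrSc e e.2)))
    (fun _ _ => Set.indicator_nonneg (fun _ _ => zero_le_one) _)
    (fun _ _ hσ _ => hA.monotone_indicator (glue_mono hσ le_rfl))
    (fun _ _ _ hτ => hA.monotone_indicator (glue_mono le_rfl hτ))
  exact (openProbGE_sum_glue hw ha hwa (hC e e.2) (hCS e e.2) e (hb e e.2).1 (hwb e e.2) σ).mono
    (fun _ => Finset.sum_nonneg fun _ _ => hw _) (hrS e e.2)

end Bernoulli

section Components

variable (ends : E → Sym2 V) (α : Setoid V) {F F' : Set E} {e : E}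

lemma connSetoid_mono (h : F ⊆ F') : connSetoid ends α F ≤ connSetoid ends α F' :=
  Setoid.eqvGen_mono fun _ _ ⟨e, he, hxy⟩ => ⟨e, h he, hxy⟩

variable {ends α}

lemma EndsConn.mono (hc : EndsConn ends α F e) (h : F ⊆ F') : EndsConn ends α F' e :=
  fun x y hxy => connSetoid_mono ends α h (hc x y hxy)

lemma connSetoid_insert_le {s : Setoid (Quotient α)} (hF : connSetoid ends α F ≤ s) {x y : V}
    (he : ends e = s(x, y)) (hs : s (Quotient.mk α x) (Quotient.mk α y)) :
    connSetoid ends α (insert e F) ≤ s := by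
  refine Setoid.eqvGen_le fun a b ⟨e', he', hab⟩ => ?_
  obtain rfl | he' := he'
  · rw [he, Sym2.map_mk, Sym2.eq_iff] at hab
    obtain ⟨rfl, rfl⟩ | ⟨rfl, rfl⟩ := hab
    exacts [hs, s.symm hs]
  · exact hF (Relation.EqvGen.rel _ _ ⟨e', he', hab⟩)

lemma EndsConn.connSetoid_insert (hc : EndsConn ends α F e) :
    connSetoid ends α (insert e F) = connSetoid ends α F := by
  obtain ⟨x, y, he⟩ : ∃ x y, ends e = s(x, y) := Sym2.exists.1 ⟨ends e, rfl⟩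
  exact le_antisymm (connSetoid_insert_le le_rfl he (hc x y he))
    (connSetoid_mono ends α (Set.subset_insert e F))

-- Redirecting the component of `x` to that of `y` sends the components for `insert e F` to those
-- for `F`, and misses at most the component of `x`.
lemma card_quotient_connSetoid_le_insert [Finite V] (ends : E → Sym2 V) (α : Setoid V) (F : Set E)
    (e : E) : Nat.card (Quotient (connSetoid ends α F)) ≤
      Nat.card (Quotient (connSetoid ends α (insert e F))) + 1 := by
  obtain ⟨x, y, he⟩ : ∃ x y, ends e = s(x, y) := Sym2.exists.1 ⟨ends e, rfl⟩
  let comp (v : Quotient α) : Quotient (connSetoid ends α F) := Quotient.mk _ v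
  let redirect (v : Quotient α) : Quotient (connSetoid ends α F) :=
    if comp v = comp (Quotient.mk α x) then comp (Quotient.mk α y) else comp v
  have hle : connSetoid ends α (insert e F) ≤ Setoid.ker redirect := by
    refine connSetoid_insert_le (fun a b hab => ?_) he ?_
    · have hcomp : comp a = comp b := Quotient.sound hab
      simp only [Setoid.ker_def, redirect, hcomp]
    · simp only [Setoid.ker_def, redirect, if_true, ite_self]
  let g : Option (Quotient (connSetoid ends α (insert e F))) → Quotient (connSetoid ends α F) :=
    fun c => c.elim (comp (Quotient.mk α x)) (Quotient.lift redirect fun _ _ h => hle h)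
  have hg : Function.Surjective g := by
    refine Quotient.ind fun v => ?_
    by_cases hv : comp v = comp (Quotient.mk α x)
    · exact ⟨none, hv.symm⟩
    · exact ⟨some (Quotient.mk _ v), if_neg hv⟩
  simpa only [Finite.card_option] using Nat.card_le_card_of_surjective g hg

end Components

section FK

lemma setOf_update_true (ω : E → Bool) (e : E) :
    {e' | Function.update ω e true e' = true} =
      insert e {e' | Function.update ω e false e' = true} := by
  ext e'
  by_cases h : e' = e <;> simp [h]

lemma numComponents_update_false_le [Finite V] (ends : E → Sym2 V) (α : Setoid V) (ω : E → Bool)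
    (e : E) : numComponents ends α (Function.update ω e false) ≤
      numComponents ends α (Function.update ω e true) + 1 := by
  simpa only [numComponents, setOf_update_true] using
    card_quotient_connSetoid_le_insert ends α _ e

lemma EndsConn.numComponents_update {ends : E → Sym2 V} {α : Setoid V} {ω : E → Bool} {e : E}
    (hc : EndsConn ends α {e' | Function.update ω e false e' = true} e) :
    numComponents ends α (Function.update ω e true) =
      numComponents ends α (Function.update ω e false) := by
  simp only [numComponents, setOf_update_true, hc.connSetoid_insert]

variable (ends : E → Sym2 V) (α : Setoid V)

/-- The event that some path of `Γ_{E∖S}(e)` is open, expressed as connectivity of the endpoints of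
`e` through the open edges off `S`. For `e ∈ S` it forces the conditional probability `p` at `e`. -/
def openPathOff (S : Set E) (e : E) : Set (E → Bool) :=
  {ω | EndsConn ends α (Sᶜ ∩ {e' | ω e' = true}) e}

lemma increasing_openPathOff (S : Set E) (e : E) : Increasing (openPathOff ends α S e) :=
  fun _ _ hω hle => EndsConn.mono hω <| Set.inter_subset_inter_right _ fun e' he' =>
    Bool.eq_true_of_true_le (he' ▸ hle e')

lemma dependsOn_openPathOff (S : Set E) (e : E) : DependsOn (· ∈ openPathOff ends α S e) Sᶜ := by
  intro ω ω' h
  have hopen : Sᶜ ∩ {e' | ω e' = true} = Sᶜ ∩ {e' | ω' e' = true} := by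
    ext e'
    exact and_congr_right fun he' => by simp [h e' he']
  simp only [openPathOff, Set.mem_ofPred_eq, hopen]

variable {p q : ℝ}

lemma pPrime_denom_pos (hp : p ∈ Set.Ioo 0 1) (hq : 0 < q) : 0 < p + q * (1 - p) :=
  add_pos hp.1 (mul_pos hq (sub_pos.2 hp.2))

lemma pPrime_pos (hp : p ∈ Set.Ioo 0 1) (hq : 0 < q) : 0 < pPrime p q :=
  div_pos hp.1 (pPrime_denom_pos hp hq)

lemma pPrime_le_iff (hp : p ∈ Set.Ioo 0 1) (hq : 0 < q) : pPrime p q ≤ p ↔ 1 ≤ q := by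
  rw [pPrime, div_le_iff₀ (pPrime_denom_pos hp hq), le_mul_iff_one_le_right hp.1,
    ← sub_nonneg, show p + q * (1 - p) - 1 = (q - 1) * (1 - p) by ring,
    mul_nonneg_iff_of_pos_right (sub_pos.2 hp.2), sub_nonneg]

variable [Fintype E]

lemma fkWeight_eq_berWeight_mul (p q : ℝ) (ω : E → Bool) :
    fkWeight ends α p q ω = berWeight (fun _ => p) ω * q ^ numComponents ends α ω := by
  simp [fkWeight, berWeight, Finset.prod_ite]

lemma fkWeight_pos (hp : p ∈ Set.Ioo 0 1) (hq : 0 < q) (ω : E → Bool) :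
    0 < fkWeight ends α p q ω :=
  mul_pos (mul_pos (pow_pos hp.1 _) (pow_pos (sub_pos.2 hp.2) _)) (pow_pos hq _)

variable {ends α} in
lemma openProbGE_fkWeight_of_endsConn (p q : ℝ) {ω : E → Bool} {e : E}
    (hc : EndsConn ends α {e' | Function.update ω e false e' = true} e) :
    OpenProbGE (fkWeight ends α p q) ω e p := by
  simp only [OpenProbGE, fkWeight_eq_berWeight_mul, berWeight_update, hc.numComponents_update,
    if_true, Bool.false_eq_true, if_false]
  exact le_of_eq (by ring)

lemma openProbGE_fkWeight_pPrime [Finite V] (hp : p ∈ Set.Ioo 0 1) (hq : 1 ≤ q) (ω : E → Bool)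
    (e : E) : OpenProbGE (fkWeight ends α p q) ω e (pPrime p q) := by
  have hpow : q ^ numComponents ends α (Function.update ω e false) ≤
      q * q ^ numComponents ends α (Function.update ω e true) := by
    rw [← pow_succ']
    exact pow_le_pow_right₀ hq (numComponents_update_false_le ends α ω e)
  rw [OpenProbGE, pPrime, div_mul_eq_mul_div,
    div_le_iff₀ (pPrime_denom_pos hp (zero_lt_one.trans_le hq))]
  simp only [fkWeight_eq_berWeight_mul, berWeight_update, if_true, Bool.false_eq_true, if_false]
  set B := ∏ e' ∈ Finset.univ.erase e, if ω e' = true then p else 1 - p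
  set k₁ := numComponents ends α (Function.update ω e true)
  have hB : 0 ≤ B := Finset.prod_nonneg fun e' _ => by
    split_ifs
    exacts [hp.1.le, (sub_pos.2 hp.2).le]
  have hcoef : 0 ≤ p * ((1 - p) * B) :=
    mul_nonneg hp.1.le (mul_nonneg (sub_pos.2 hp.2).le hB)
  linear_combination mul_le_mul_of_nonneg_left hpow hcoef

lemma openProbGE_fkWeight_of_mem_openPathOff (p q : ℝ) {S : Set E} {e : E} (he : e ∈ S)
    {ω : E → Bool} (hω : ω ∈ openPathOff ends α S e) :
    OpenProbGE (fkWeight ends α p q) ω e p := by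
  refine openProbGE_fkWeight_of_endsConn p q (EndsConn.mono hω fun e' ⟨he'S, he'⟩ => ?_)
  have hne : e' ≠ e := fun h => he'S (h ▸ he)
  simpa [hne] using he'

end FK

theorem below_enhancement_of_gt_paths_general
    {V E : Type*} [Finite V] [Fintype E]
    (ends : E → Sym2 V) (α : Setoid V)
    {p q : ℝ} (hp : p ∈ Set.Ioo (0 : ℝ) 1) (hq : 1 ≤ q)
    (Etilde : Set E) {εtilde : E → ℝ}
    (hε : ∀ e, εtilde e =
      if e ∈ Etilde then
        (p - pPrime p q) *
          berProb (fun _ => min p (pPrime p q))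
            {ω | EndsConn ends α (Etildeᶜ ∩ {e' | ω e' = true}) e}
      else 0) :
    StochDom (berProb fun e => pPrime p q + εtilde e) (fkProb ends α p q) := by
  have hq₀ : 0 < q := zero_lt_one.trans_le hq
  have hp' : pPrime p q ≤ p := (pPrime_le_iff hp hq₀).2 hq
  have hp'₀ : 0 ≤ pPrime p q := (pPrime_pos hp hq₀).le
  have hp'_mem : pPrime p q ∈ Set.Ico 0 1 := ⟨hp'₀, hp'.trans_lt hp.2⟩
  rw [min_eq_right hp'] at hε
  have hε₀ (e : E) : 0 ≤ εtilde e := by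
    rw [hε]
    split_ifs
    exacts [mul_nonneg (sub_nonneg.2 hp')
      (berProb_mem_Icc (fun _ => Set.Ico_subset_Icc_self hp'_mem) _).1, le_rfl]
  exact stochDom_probOf_of_openProbGE (fun ω => (fkWeight_pos ends α hp hq₀ ω).le)
    (Finset.sum_pos (fun ω _ => fkWeight_pos ends α hp hq₀ ω) Finset.univ_nonempty)
    (fun _ => hp'_mem) (fun _ _ => ⟨hp', hp.2⟩)
    (fun e _ => increasing_openPathOff ends α Etilde e)
    (fun e _ => dependsOn_openPathOff ends α Etilde e)
    (openProbGE_fkWeight_pPrime ends α hp hq)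
    (fun _ he _ hω => openProbGE_fkWeight_of_mem_openPathOff ends α p q he hω)
    (fun e => add_nonneg hp'₀ (hε₀ e))
    (fun e he => by rw [hε, if_pos he]; rfl)
    (fun e he => by rw [hε, if_neg he, add_zero])

/-- **Proposition 3.2, item 2** (lower enhancement via connecting paths, case `p > p'`). -/
theorem below_enhancement_of_gt_paths
    {V E : Type*} [Fintype V] [Fintype E]
    (ends : E → Sym2 V) (α : Setoid V)
    (p q : ℝ) (hp : p ∈ Set.Ioo (0 : ℝ) 1) (hq : 0 < q)
    (hpp' : pPrime p q < p)
    (Etilde : Set E)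
    (hpath : ∀ e ∈ Etilde, EndsConn ends α Etildeᶜ e)
    (εtilde : E → ℝ)
    (hε : ∀ e, εtilde e =
      if e ∈ Etilde then
        (p - pPrime p q) *
          berProb (fun _ => min p (pPrime p q))
            {ω | EndsConn ends α (Etildeᶜ ∩ {e' | ω e' = true}) e}
      else 0) :
    StochDom (berProb fun e => pPrime p q + εtilde e) (fkProb ends α p q) := by
  exact below_enhancement_of_gt_paths_general ends α hp ((pPrime_le_iff hp hq).1 hpp'.le) Etilde hε

end FKPaper
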